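/- Let l ≥ 1 and let h[l] denote the Cheeger constant of the neighborhood graph Γ[l]. If l is even, then all eigenvalues of Δ satisfy 1 − (1 − h[l]²)^{1/(2l)} ≤ λ_1 ≤ … ≤ λ_{N−1} ≤ 1 + (1 − h[l]²)^{1/(2l)}. If l is odd, then 1 − (1 − h[l]²)^{1/(2l)} ≤ λ_1. -/

import Mathlib

open Finset

noncomputable section

namespace BJ

variable {V : Type*} [Fintype V] [DecidableEq V]

/-- The degree `d_i = ∑_j w_ij` of a vertex. -/
def deg (w : V → V → ℝ) (i : V) : ℝ := ∑ j, w i j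

/-- The volume `vol(A) = ∑_{i ∈ A} d_i` of a vertex subset. -/
def vol (w : V → V → ℝ) (A : Finset V) : ℝ := ∑ i ∈ A, deg w i

/-- The total edge weight `|E(A,B)| = ∑_{i ∈ A, j ∈ B} w_ij` between two vertex subsets. -/
def eW (w : V → V → ℝ) (A B : Finset V) : ℝ := ∑ i ∈ A, ∑ j ∈ B, w i j

/-- The normalized graph Laplacian `(Δu)(i) = u(i) - (1/d_i) ∑_j w_ij u(j)`. -/
def lap (w : V → V → ℝ) (u : V → ℝ) (i : V) : ℝ :=
  u i - (1 / deg w i) * ∑ j, w i j * u j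

/-- `lam` is an eigenvalue of the normalized graph Laplacian. -/
def IsEigen (w : V → V → ℝ) (lam : ℝ) : Prop :=
  ∃ u : V → ℝ, u ≠ 0 ∧ ∀ i, lap w u i = lam * u i

/-- The weighted graph is connected: any two vertices are joined by a chain of
positive-weight edges. -/
def Conn (w : V → V → ℝ) : Prop :=
  ∀ i j : V, Relation.ReflTransGen (fun a b => 0 < w a b) i j

/-- The weighted graph is bipartite: the vertex set splits into two nonempty classes with
no edges inside a class. -/
def Bipartite (w : V → V → ℝ) : Prop :=
  ∃ A : Finset V, A.Nonempty ∧ Aᶜ.Nonempty ∧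
    (∀ i ∈ A, ∀ j ∈ A, w i j = 0) ∧ (∀ i ∈ Aᶜ, ∀ j ∈ Aᶜ, w i j = 0)

/-- The Cheeger constant
`h = min { |E(U,Uᶜ)| / vol(U) : ∅ ≠ U ⊊ V, vol(U) ≤ vol(V)/2 }`. -/
def cheeger (w : V → V → ℝ) : ℝ :=
  sInf { r : ℝ | ∃ U : Finset V, U.Nonempty ∧ U ≠ Finset.univ ∧
    vol w U ≤ vol w Finset.univ / 2 ∧ r = eW w U Uᶜ / vol w U }

/-- The dual Cheeger constant
`h̄ = max { 2|E(V₁,V₂)| / (vol(V₁)+vol(V₂)) }` over pairs of disjoint nonempty vertex sets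
`V₁, V₂` (the third class `V₃` of the partition being the complement of `V₁ ∪ V₂`). -/
def dualCheeger (w : V → V → ℝ) : ℝ :=
  sSup { r : ℝ | ∃ V1 V2 : Finset V, V1.Nonempty ∧ V2.Nonempty ∧ Disjoint V1 V2 ∧
    r = 2 * eW w V1 V2 / (vol w V1 + vol w V2) }

/-- The weights of the neighborhood graph `Γ[l]`:
`w_ij[l] = ∑_{k₁,…,k_{l-1}} w_{i k₁} w_{k₁ k₂} ⋯ w_{k_{l-1} j} / (d_{k₁} ⋯ d_{k_{l-1}})`,
defined recursively (as a matrix, `wl w l = D ⬝ P^l`; in particular `wl w 1 = w`). -/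
def wl (w : V → V → ℝ) : ℕ → V → V → ℝ
  | 0 => fun i j => if i = j then deg w i else 0
  | n + 1 => fun i j => ∑ k, wl w n i k * w k j / deg w k

/-!
The walk operator of `Γ[l]` is the power `P ^ l` of the walk operator `P = 1 - Δ` of `Γ`, so an
eigenfunction of `Δ` for `λ` is an eigenfunction of the walk operator of `Γ[l]` for `(1 - λ) ^ l`.
If `λ ≠ 0` it is orthogonal to the constants, and Cheeger's inequality in `Γ[l]` yields
`(1 - λ) ^ (2 * l) ≤ 1 - h[l] ^ 2` as soon as `0 ≤ (1 - λ) ^ l`.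

Cheeger's inequality itself is obtained in the sharp form `μ ^ 2 ≤ 1 - h ^ 2` by cutting the
eigenfunction `u` (or `-u`) down to its positive part `g`, supported on at most half of the volume.
The coarea formula for `g ^ 2` bounds `h * ∑ d_i g_i ^ 2` by the total variation of `g ^ 2`, and
Cauchy–Schwarz applied to `g_i ^ 2 - g_j ^ 2 = (g_i - g_j) * (g_i + g_j)` bounds the latter.
-/

/-- Balanced (Eulerian) weights on a directed graph: the in-degree `∑ i, w i j` of each vertex
equals its out-degree `deg w j`, so that `deg w` is a stationary measure of the random walk. -/
def IsBalanced (w : V → V → ℝ) : Prop := ∀ j, ∑ i, w i j = deg w j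

/-- The squared norm of `u` in `ℓ²(V, deg w)`. -/
def normSq (w : V → V → ℝ) (u : V → ℝ) : ℝ := ∑ i, deg w i * u i ^ 2

/-- The quadratic form `⟨u, P u⟩` of the walk operator `P = D⁻¹ w` in `ℓ²(V, deg w)`. -/
def walkForm (w : V → V → ℝ) (u : V → ℝ) : ℝ := ∑ i, ∑ j, w i j * (u i * u j)

/-- `u` solves the eigenvalue equation `P u = μ u` of the walk operator `P = D⁻¹ w`, multiplied
through by the degrees. The zero function is allowed. -/
def IsWalkEigenfunction (w : V → V → ℝ) (μ : ℝ) (u : V → ℝ) : Prop :=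
  ∀ i, ∑ j, w i j * u j = μ * (deg w i * u i)

/-- The superlevel set `{f > t}`, over which the coarea formula integrates. -/
def superlevel (f : V → ℝ) (t : ℝ) : Finset V := univ.filter fun i => t < f i

/-- The set of isoperimetric quotients whose infimum is `cheeger w`. -/
def cheegerQuotients (w : V → V → ℝ) : Set ℝ :=
  { r : ℝ | ∃ U : Finset V, U.Nonempty ∧ U ≠ Finset.univ ∧
    vol w U ≤ vol w Finset.univ / 2 ∧ r = eW w U Uᶜ / vol w U }

variable {w : V → V → ℝ}

section Sums

omit [DecidableEq V]

theorem isBalanced_of_symm (hsym : ∀ i j, w i j = w j i) : IsBalanced w := fun j =>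
  Finset.sum_congr rfl fun i _ => hsym i j

theorem sum_sum_mul_left (w : V → V → ℝ) (f : V → ℝ) :
    ∑ i, ∑ j, w i j * f i = ∑ i, deg w i * f i := by
  simp only [deg, Finset.sum_mul]

theorem IsBalanced.sum_sum_mul_right (hw : IsBalanced w) (f : V → ℝ) :
    ∑ i, ∑ j, w i j * f j = ∑ i, deg w i * f i := by
  rw [Finset.sum_comm]
  simp only [← Finset.sum_mul, hw _]

theorem deg_nonneg (hnn : ∀ i j, 0 ≤ w i j) (i : V) : 0 ≤ deg w i :=
  Finset.sum_nonneg fun j _ => hnn i j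

theorem vol_nonneg (hnn : ∀ i j, 0 ≤ w i j) (A : Finset V) : 0 ≤ vol w A :=
  Finset.sum_nonneg fun i _ => deg_nonneg hnn i

theorem vol_mono (hnn : ∀ i j, 0 ≤ w i j) {A B : Finset V} (hAB : A ⊆ B) : vol w A ≤ vol w B :=
  Finset.sum_le_sum_of_subset_of_nonneg hAB fun i _ _ => deg_nonneg hnn i

omit [Fintype V] in
theorem eW_nonneg (hnn : ∀ i j, 0 ≤ w i j) (A B : Finset V) : 0 ≤ eW w A B :=
  Finset.sum_nonneg fun i _ => Finset.sum_nonneg fun j _ => hnn i j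

theorem eW_le_vol (hnn : ∀ i j, 0 ≤ w i j) (A B : Finset V) : eW w A B ≤ vol w A :=
  Finset.sum_le_sum fun i _ =>
    Finset.sum_le_sum_of_subset_of_nonneg (Finset.subset_univ B) fun j _ _ => hnn i j

theorem normSq_pos (hdeg : ∀ i, 0 < deg w i) {u : V → ℝ} (hu : u ≠ 0) : 0 < normSq w u := by
  obtain ⟨i, hi⟩ := Function.ne_iff.1 hu
  exact Finset.sum_pos' (fun j _ => mul_nonneg (hdeg j).le (sq_nonneg _))
    ⟨i, Finset.mem_univ i, mul_pos (hdeg i) (sq_pos_of_ne_zero hi)⟩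

end Sums

section Cheeger

theorem nonneg_of_mem_cheegerQuotients (hnn : ∀ i j, 0 ≤ w i j) {r : ℝ}
    (hr : r ∈ cheegerQuotients w) : 0 ≤ r := by
  obtain ⟨U, -, -, -, rfl⟩ := hr
  exact div_nonneg (eW_nonneg hnn _ _) (vol_nonneg hnn _)

theorem le_one_of_mem_cheegerQuotients (hnn : ∀ i j, 0 ≤ w i j) {r : ℝ}
    (hr : r ∈ cheegerQuotients w) : r ≤ 1 := by
  obtain ⟨U, -, -, -, rfl⟩ := hr
  exact div_le_one_of_le₀ (eW_le_vol hnn _ _) (vol_nonneg hnn _)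

theorem cheeger_nonneg (hnn : ∀ i j, 0 ≤ w i j) : 0 ≤ cheeger w :=
  Real.sInf_nonneg fun _ => nonneg_of_mem_cheegerQuotients hnn

theorem cheeger_le_of_mem_cheegerQuotients (hnn : ∀ i j, 0 ≤ w i j) {r : ℝ}
    (hr : r ∈ cheegerQuotients w) : cheeger w ≤ r :=
  csInf_le ⟨0, fun _ => nonneg_of_mem_cheegerQuotients hnn⟩ hr

theorem cheeger_le_one (hnn : ∀ i j, 0 ≤ w i j) : cheeger w ≤ 1 := by
  rcases (cheegerQuotients w).eq_empty_or_nonempty with hempty | ⟨r, hr⟩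
  · have hzero : cheeger w = 0 := (congrArg sInf hempty).trans Real.sInf_empty
    exact hzero.trans_le zero_le_one
  · exact (cheeger_le_of_mem_cheegerQuotients hnn hr).trans (le_one_of_mem_cheegerQuotients hnn hr)

theorem cheeger_mul_vol_le_eW (hnn : ∀ i j, 0 ≤ w i j) {U : Finset V}
    (hU : vol w U ≤ vol w univ / 2) : cheeger w * vol w U ≤ eW w U Uᶜ := by
  rcases (vol_nonneg hnn U).eq_or_lt with hzero | hpos
  · rw [← hzero, mul_zero]
    exact eW_nonneg hnn _ _
  have hne : U.Nonempty := by
    rw [Finset.nonempty_iff_ne_empty]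
    rintro rfl
    simp [vol] at hpos
  have hproper : U ≠ univ := by
    rintro rfl
    linarith
  rw [← le_div_iff₀ hpos]
  exact cheeger_le_of_mem_cheegerQuotients hnn ⟨U, hne, hproper, hU, rfl⟩

end Cheeger

section Coarea

open MeasureTheory

omit [DecidableEq V] in
theorem vol_superlevel (w : V → V → ℝ) (f : V → ℝ) (t : ℝ) :
    vol w (superlevel f t) = ∑ i, deg w i * (Set.Iio (f i)).indicator 1 t := by
  simp [vol, superlevel, Finset.sum_filter, Set.indicator_apply]

theorem eW_superlevel_compl (w : V → V → ℝ) (f : V → ℝ) (t : ℝ) :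
    eW w (superlevel f t) (superlevel f t)ᶜ =
      ∑ i, ∑ j, w i j * (Set.Ico (f j) (f i)).indicator 1 t := by
  simp only [eW, superlevel, Finset.compl_filter, Finset.sum_filter, not_lt]
  refine Finset.sum_congr rfl fun i _ => ?_
  by_cases hi : t < f i <;> simp [Set.indicator_apply, hi]

theorem integrable_indicator_one {α : Type*} [MeasurableSpace α] {μ : Measure α} {s : Set α}
    (hs : MeasurableSet s) (hfin : μ s ≠ ⊤) : Integrable (s.indicator (1 : α → ℝ)) μ :=
  (integrable_indicator_iff hs).2 (integrableOn_const hfin)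

theorem integrableOn_Ici_indicator_Iio (a b : ℝ) :
    IntegrableOn ((Set.Iio b).indicator (1 : ℝ → ℝ)) (Set.Ici a) :=
  integrable_indicator_one measurableSet_Iio <| by
    simp [Measure.restrict_apply measurableSet_Iio, Set.inter_comm, Set.Ici_inter_Iio]

theorem integrableOn_indicator_Ico (a b : ℝ) (s : Set ℝ) :
    IntegrableOn ((Set.Ico a b).indicator (1 : ℝ → ℝ)) s :=
  (integrable_indicator_one measurableSet_Ico (by simp)).integrableOn

omit [DecidableEq V] in
theorem integrableOn_vol_superlevel (w : V → V → ℝ) (f : V → ℝ) :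
    IntegrableOn (fun t => vol w (superlevel f t)) (Set.Ici 0) := by
  simp only [vol_superlevel]
  exact integrable_finsetSum _ fun i _ => (integrableOn_Ici_indicator_Iio 0 (f i)).const_mul _

theorem integrableOn_eW_superlevel_compl (w : V → V → ℝ) (f : V → ℝ) (s : Set ℝ) :
    IntegrableOn (fun t => eW w (superlevel f t) (superlevel f t)ᶜ) s := by
  simp only [eW_superlevel_compl]
  exact integrable_finsetSum _ fun i _ => integrable_finsetSum _ fun j _ =>
    (integrableOn_indicator_Ico (f j) (f i) s).const_mul _

omit [DecidableEq V] in
theorem setIntegral_vol_superlevel (w : V → V → ℝ) {f : V → ℝ} (hf : ∀ i, 0 ≤ f i) :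
    ∫ t in Set.Ici 0, vol w (superlevel f t) = ∑ i, deg w i * f i := by
  simp only [vol_superlevel]
  rw [integral_finsetSum _ fun i _ => (integrableOn_Ici_indicator_Iio 0 (f i)).const_mul _]
  refine Finset.sum_congr rfl fun i _ => ?_
  rw [integral_const_mul, integral_indicator_one measurableSet_Iio,
    measureReal_restrict_apply measurableSet_Iio, Set.inter_comm, Set.Ici_inter_Iio,
    Real.volume_real_Ico_of_le (hf i), sub_zero]

theorem setIntegral_eW_superlevel_compl (w : V → V → ℝ) {f : V → ℝ} (hf : ∀ i, 0 ≤ f i) :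
    ∫ t in Set.Ici 0, eW w (superlevel f t) (superlevel f t)ᶜ =
      ∑ i, ∑ j, w i j * max (f i - f j) 0 := by
  have hint (i j : V) := (integrableOn_indicator_Ico (f j) (f i) (Set.Ici 0)).const_mul (w i j)
  simp only [eW_superlevel_compl]
  rw [integral_finsetSum _ fun i _ => integrable_finsetSum _ fun j _ => hint i j]
  refine Finset.sum_congr rfl fun i _ => ?_
  rw [integral_finsetSum _ fun j _ => hint i j]
  refine Finset.sum_congr rfl fun j _ => ?_
  have hsub : Set.Ico (f j) (f i) ⊆ Set.Ici 0 := fun t ht => (hf j).trans ht.1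
  rw [integral_const_mul, integral_indicator_one measurableSet_Ico,
    measureReal_restrict_apply measurableSet_Ico, Set.inter_eq_left.2 hsub, Real.volume_real_Ico]

theorem mul_sum_deg_mul_le_of_superlevel {h : ℝ} {f : V → ℝ} (hf : ∀ i, 0 ≤ f i)
    (hcut : ∀ t, 0 ≤ t →
      h * vol w (superlevel f t) ≤ eW w (superlevel f t) (superlevel f t)ᶜ) :
    h * ∑ i, deg w i * f i ≤ ∑ i, ∑ j, w i j * max (f i - f j) 0 := by
  rw [← setIntegral_vol_superlevel w hf, ← setIntegral_eW_superlevel_compl w hf,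
    ← integral_const_mul]
  exact setIntegral_mono_on ((integrableOn_vol_superlevel w f).const_mul h)
    (integrableOn_eW_superlevel_compl w f _) measurableSet_Ici hcut

end Coarea

section CauchySchwarz

omit [DecidableEq V]

theorem IsBalanced.sum_sum_mul_sq_add (hw : IsBalanced w) (g : V → ℝ) :
    ∑ i, ∑ j, w i j * (g i + g j) ^ 2 = 2 * (normSq w g + walkForm w g) := by
  have hexpand (i j : V) : w i j * (g i + g j) ^ 2 =
      w i j * g i ^ 2 + w i j * g j ^ 2 + 2 * (w i j * (g i * g j)) := by ring
  simp only [hexpand, Finset.sum_add_distrib, ← Finset.mul_sum]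
  rw [sum_sum_mul_left w fun i => g i ^ 2, hw.sum_sum_mul_right fun i => g i ^ 2, normSq, walkForm]
  ring

theorem IsBalanced.sum_sum_mul_sq_sub (hw : IsBalanced w) (g : V → ℝ) :
    ∑ i, ∑ j, w i j * (g i - g j) ^ 2 = 2 * (normSq w g - walkForm w g) := by
  have hexpand (i j : V) : w i j * (g i - g j) ^ 2 =
      w i j * g i ^ 2 + w i j * g j ^ 2 - 2 * (w i j * (g i * g j)) := by ring
  simp only [hexpand, Finset.sum_sub_distrib, Finset.sum_add_distrib, ← Finset.mul_sum]
  rw [sum_sum_mul_left w fun i => g i ^ 2, hw.sum_sum_mul_right fun i => g i ^ 2, normSq, walkForm]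
  ring

theorem IsBalanced.sum_sum_mul_abs_sub (hw : IsBalanced w) (f : V → ℝ) :
    ∑ i, ∑ j, w i j * |f i - f j| = 2 * ∑ i, ∑ j, w i j * max (f i - f j) 0 := by
  have hexpand (i j : V) : w i j * |f i - f j| =
      2 * (w i j * max (f i - f j) 0) - (w i j * f i - w i j * f j) := by
    rcases le_total (f i - f j) 0 with hle | hle
    · rw [abs_of_nonpos hle, max_eq_right hle]
      ring
    · rw [abs_of_nonneg hle, max_eq_left hle]
      ring
  simp only [hexpand, Finset.sum_sub_distrib, ← Finset.mul_sum]
  rw [sum_sum_mul_left, hw.sum_sum_mul_right, sub_self, sub_zero]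

theorem sq_sum_sum_mul_abs_sq_sub_sq_le (hnn : ∀ i j, 0 ≤ w i j) (g : V → ℝ) :
    (∑ i, ∑ j, w i j * |g i ^ 2 - g j ^ 2|) ^ 2 ≤
      (∑ i, ∑ j, w i j * (g i - g j) ^ 2) * ∑ i, ∑ j, w i j * (g i + g j) ^ 2 := by
  simp only [← Fintype.sum_prod_type']
  refine Finset.sum_sq_le_sum_mul_sum_of_sq_le_mul _
    (fun p _ => mul_nonneg (hnn _ _) (sq_nonneg _))
    (fun p _ => mul_nonneg (hnn _ _) (sq_nonneg _)) fun p _ => le_of_eq ?_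
  rw [mul_pow, sq_abs]
  ring

theorem IsBalanced.sq_sum_sum_mul_max_le (hw : IsBalanced w) (hnn : ∀ i j, 0 ≤ w i j)
    (g : V → ℝ) :
    (∑ i, ∑ j, w i j * max (g i ^ 2 - g j ^ 2) 0) ^ 2 ≤ normSq w g ^ 2 - walkForm w g ^ 2 := by
  have hcs := sq_sum_sum_mul_abs_sq_sub_sq_le hnn g
  rw [hw.sum_sum_mul_abs_sub fun i => g i ^ 2, hw.sum_sum_mul_sq_sub, hw.sum_sum_mul_sq_add] at hcs
  linarith

end CauchySchwarz

section CheegerInequality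

theorem cheeger_mul_normSq_le (hnn : ∀ i j, 0 ≤ w i j) {g : V → ℝ}
    (hsupp : vol w (univ.filter fun i => g i ≠ 0) ≤ vol w univ / 2) :
    cheeger w * normSq w g ≤ ∑ i, ∑ j, w i j * max (g i ^ 2 - g j ^ 2) 0 := by
  refine mul_sum_deg_mul_le_of_superlevel (fun i => sq_nonneg (g i)) fun t ht =>
    cheeger_mul_vol_le_eW hnn ((vol_mono hnn fun i hi => ?_).trans hsupp)
  have hpos : 0 < g i ^ 2 := ht.trans_lt (Finset.mem_filter.1 hi).2
  exact Finset.mem_filter.2 ⟨Finset.mem_univ i, sq_pos_iff.1 hpos⟩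

theorem IsBalanced.sq_walkForm_le (hw : IsBalanced w) (hnn : ∀ i j, 0 ≤ w i j) {g : V → ℝ}
    (hsupp : vol w (univ.filter fun i => g i ≠ 0) ≤ vol w univ / 2) :
    walkForm w g ^ 2 ≤ (1 - cheeger w ^ 2) * normSq w g ^ 2 := by
  have hnorm : 0 ≤ normSq w g :=
    Finset.sum_nonneg fun i _ => mul_nonneg (deg_nonneg hnn i) (sq_nonneg _)
  have hsq : (cheeger w * normSq w g) ^ 2 ≤ normSq w g ^ 2 - walkForm w g ^ 2 :=
    (pow_le_pow_left₀ (mul_nonneg (cheeger_nonneg hnn) hnorm)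
      (cheeger_mul_normSq_le hnn hsupp) 2).trans (hw.sq_sum_sum_mul_max_le hnn g)
  linarith

omit [DecidableEq V] in
theorem IsWalkEigenfunction.neg {μ : ℝ} {u : V → ℝ} (hu : IsWalkEigenfunction w μ u) :
    IsWalkEigenfunction w μ (-u) := fun i => by
  simp [hu i]

omit [DecidableEq V] in
theorem IsWalkEigenfunction.mul_normSq_posPart_le (hnn : ∀ i j, 0 ≤ w i j) {μ : ℝ} {u : V → ℝ}
    (hu : IsWalkEigenfunction w μ u) : μ * normSq w u⁺ ≤ walkForm w u⁺ := by
  rw [normSq, walkForm, Finset.mul_sum]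
  refine Finset.sum_le_sum fun i _ => ?_
  rcases le_total (u i) 0 with hi | hi
  · simp [Pi.posPart_apply, posPart_of_nonpos hi]
  calc μ * (deg w i * u⁺ i ^ 2)
      = u⁺ i * ∑ j, w i j * u j := by
        rw [hu i, Pi.posPart_apply, posPart_of_nonneg hi]
        ring
    _ ≤ u⁺ i * ∑ j, w i j * u⁺ j :=
        mul_le_mul_of_nonneg_left (Finset.sum_le_sum fun j _ =>
          mul_le_mul_of_nonneg_left (le_posPart (u j)) (hnn i j)) (posPart_nonneg (u i))
    _ = ∑ j, w i j * (u⁺ i * u⁺ j) := by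
        rw [Finset.mul_sum]
        exact Finset.sum_congr rfl fun j _ => by ring

omit [DecidableEq V] in
theorem posPart_ne_zero_of_sum_deg_mul_eq_zero (hdeg : ∀ i, 0 < deg w i) {u : V → ℝ}
    (hu : u ≠ 0) (horth : ∑ i, deg w i * u i = 0) : u⁺ ≠ 0 := by
  obtain ⟨a, ha⟩ := Function.ne_iff.1 hu
  obtain ⟨i, -, hi⟩ := Finset.exists_pos_of_sum_zero_of_exists_nonzero _ horth
    ⟨a, Finset.mem_univ a, mul_ne_zero (hdeg a).ne' ha⟩
  exact Function.ne_iff.2 ⟨i, (posPart_pos (pos_of_mul_pos_right hi (hdeg i).le)).ne'⟩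

omit [DecidableEq V] in
theorem vol_support_posPart_add_le (hnn : ∀ i j, 0 ≤ w i j) (u : V → ℝ) :
    vol w (univ.filter fun i => u⁺ i ≠ 0) + vol w (univ.filter fun i => (-u)⁺ i ≠ 0) ≤
      vol w univ := by
  classical
  have hdisj : Disjoint (univ.filter fun i => u⁺ i ≠ 0) (univ.filter fun i => (-u)⁺ i ≠ 0) := by
    refine Finset.disjoint_filter.2 fun i _ hpos hneg => ?_
    simp only [Pi.posPart_apply, Pi.neg_apply, ne_eq, posPart_eq_zero, not_le] at hpos hneg
    linarith
  rw [vol, vol, ← Finset.sum_union hdisj]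
  exact vol_mono hnn (Finset.subset_univ _)

theorem IsWalkEigenfunction.sq_le_one_sub_sq_cheeger (hw : IsBalanced w)
    (hnn : ∀ i j, 0 ≤ w i j) (hdeg : ∀ i, 0 < deg w i) {μ : ℝ} (hμ : 0 ≤ μ) {u : V → ℝ}
    (hu : IsWalkEigenfunction w μ u) (hne : u ≠ 0) (horth : ∑ i, deg w i * u i = 0) :
    μ ^ 2 ≤ 1 - cheeger w ^ 2 := by
  wlog hsupp : vol w (univ.filter fun i => u⁺ i ≠ 0) ≤ vol w univ / 2 generalizing u
  · refine this hu.neg (neg_ne_zero.2 hne) (by simpa using horth) ?_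
    linarith [vol_support_posPart_add_le hnn u]
  have hpos : 0 < normSq w u⁺ :=
    normSq_pos hdeg (posPart_ne_zero_of_sum_deg_mul_eq_zero hdeg hne horth)
  refine le_of_mul_le_mul_right ?_ (pow_pos hpos 2)
  calc μ ^ 2 * normSq w u⁺ ^ 2
      = (μ * normSq w u⁺) ^ 2 := (mul_pow _ _ _).symm
    _ ≤ walkForm w u⁺ ^ 2 :=
        pow_le_pow_left₀ (mul_nonneg hμ hpos.le) (hu.mul_normSq_posPart_le hnn) 2
    _ ≤ (1 - cheeger w ^ 2) * normSq w u⁺ ^ 2 := hw.sq_walkForm_le hnn hsupp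

end CheegerInequality

section NeighborhoodGraph

theorem wl_nonneg (hnn : ∀ i j, 0 ≤ w i j) (n : ℕ) (i j : V) : 0 ≤ wl w n i j := by
  induction n generalizing j with
  | zero =>
    simp only [wl]
    split_ifs
    exacts [deg_nonneg hnn i, le_rfl]
  | succ n ih =>
    exact Finset.sum_nonneg fun k _ => div_nonneg (mul_nonneg (ih k) (hnn k j)) (deg_nonneg hnn k)

theorem IsWalkEigenfunction.sum_wl_mul (hdeg : ∀ i, deg w i ≠ 0) {μ : ℝ} {u : V → ℝ}
    (hu : IsWalkEigenfunction w μ u) (n : ℕ) (i : V) :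
    ∑ j, wl w n i j * u j = μ ^ n * (deg w i * u i) := by
  induction n with
  | zero => simp [wl]
  | succ n ih =>
    calc ∑ j, wl w (n + 1) i j * u j
        = ∑ k, wl w n i k / deg w k * ∑ j, w k j * u j := by
          simp only [wl, Finset.sum_mul, Finset.mul_sum]
          rw [Finset.sum_comm]
          exact Finset.sum_congr rfl fun k _ => Finset.sum_congr rfl fun j _ => by ring
      _ = μ * ∑ k, wl w n i k * u k := by
          rw [Finset.mul_sum]
          refine Finset.sum_congr rfl fun k _ => ?_
          have hk := hdeg k
          rw [hu k]
          field_simp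
      _ = μ ^ (n + 1) * (deg w i * u i) := by
          rw [ih]
          ring

theorem deg_wl (hdeg : ∀ i, deg w i ≠ 0) (n : ℕ) (i : V) : deg (wl w n) i = deg w i := by
  have hone : IsWalkEigenfunction w 1 1 := fun i => by simp [deg]
  simpa [deg] using hone.sum_wl_mul hdeg n i

theorem isWalkEigenfunction_wl (hdeg : ∀ i, deg w i ≠ 0) {μ : ℝ} {u : V → ℝ}
    (hu : IsWalkEigenfunction w μ u) (n : ℕ) : IsWalkEigenfunction (wl w n) (μ ^ n) u := fun i => by
  rw [deg_wl hdeg, hu.sum_wl_mul hdeg]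

theorem isBalanced_wl (hdeg : ∀ i, deg w i ≠ 0) (hw : IsBalanced w) (n : ℕ) :
    IsBalanced (wl w n) := fun j => by
  rw [deg_wl hdeg]
  induction n generalizing j with
  | zero => simp [wl]
  | succ n ih =>
    calc ∑ i, wl w (n + 1) i j
        = ∑ k, (∑ i, wl w n i k) * (w k j / deg w k) := by
          simp only [wl, Finset.sum_mul, mul_div_assoc]
          exact Finset.sum_comm
      _ = ∑ k, w k j := Finset.sum_congr rfl fun k _ => by rw [ih, mul_div_cancel₀ _ (hdeg k)]
      _ = deg w j := hw j

end NeighborhoodGraph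

section LaplacianEigenvalues

omit [DecidableEq V] in
theorem isWalkEigenfunction_of_lap_eq (hdeg : ∀ i, deg w i ≠ 0) {lam : ℝ} {u : V → ℝ}
    (hu : ∀ i, lap w u i = lam * u i) : IsWalkEigenfunction w (1 - lam) u := fun i => by
  have hlap := hu i
  have hi := hdeg i
  unfold lap at hlap
  field_simp at hlap
  linarith

omit [DecidableEq V] in
theorem IsWalkEigenfunction.sum_deg_mul_eq_zero (hw : IsBalanced w) {μ : ℝ} (hμ : μ ≠ 1)
    {u : V → ℝ} (hu : IsWalkEigenfunction w μ u) : ∑ i, deg w i * u i = 0 := by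
  have hsum : μ * ∑ i, deg w i * u i = ∑ i, deg w i * u i := by
    calc μ * ∑ i, deg w i * u i
        = ∑ i, ∑ j, w i j * u j := by simp only [hu _, Finset.mul_sum]
      _ = ∑ i, deg w i * u i := hw.sum_sum_mul_right u
  exact (mul_left_eq_self₀.1 hsum).resolve_left hμ

theorem IsEigen.sq_pow_le_one_sub_sq_cheeger_wl (hw : IsBalanced w) (hnn : ∀ i j, 0 ≤ w i j)
    (hdeg : ∀ i, 0 < deg w i) {lam : ℝ} (hlam : IsEigen w lam) (hne : lam ≠ 0) {l : ℕ}
    (hpow : 0 ≤ (1 - lam) ^ l) : ((1 - lam) ^ l) ^ 2 ≤ 1 - cheeger (wl w l) ^ 2 := by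
  obtain ⟨u, hu0, hu⟩ := hlam
  have hdeg0 (i : V) : deg w i ≠ 0 := (hdeg i).ne'
  have hwalk : IsWalkEigenfunction w (1 - lam) u := isWalkEigenfunction_of_lap_eq hdeg0 hu
  have horth : ∑ i, deg w i * u i = 0 :=
    hwalk.sum_deg_mul_eq_zero hw (by simpa using hne)
  exact (isWalkEigenfunction_wl hdeg0 hwalk l).sq_le_one_sub_sq_cheeger
    (isBalanced_wl hdeg0 hw l) (wl_nonneg hnn l) (by simpa only [deg_wl hdeg0] using hdeg) hpow hu0
    (by simpa only [deg_wl hdeg0] using horth)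

theorem le_rpow_of_sq_pow_le {x c : ℝ} {l : ℕ} (hl : l ≠ 0) (hx : 0 ≤ x)
    (hc : (x ^ l) ^ 2 ≤ c) : x ≤ c ^ ((1 : ℝ) / (2 * l)) := by
  have hpow : x ^ (2 * (l : ℝ)) = (x ^ l) ^ 2 := by
    rw [← pow_mul', ← Real.rpow_natCast, Nat.cast_mul, Nat.cast_ofNat]
  rw [one_div, Real.le_rpow_inv_iff_of_pos hx ((sq_nonneg _).trans hc) (by positivity), hpow]
  exact hc

theorem eigenvalue_bounds_from_neighborhood_cheeger_general (hw : IsBalanced w)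
    (hnn : ∀ i j, 0 ≤ w i j) (hdeg : ∀ i, 0 < deg w i) {lam : ℝ} (hlam : IsEigen w lam)
    (hne : lam ≠ 0) {l : ℕ} (hl : 1 ≤ l) :
    1 - (1 - cheeger (wl w l) ^ 2) ^ ((1 : ℝ) / (2 * l)) ≤ lam ∧
      (Even l → lam ≤ 1 + (1 - cheeger (wl w l) ^ 2) ^ ((1 : ℝ) / (2 * l))) := by
  have hl0 : l ≠ 0 := Nat.one_le_iff_ne_zero.1 hl
  have hwl := wl_nonneg hnn l
  have hroot : 0 ≤ (1 - cheeger (wl w l) ^ 2) ^ ((1 : ℝ) / (2 * l)) :=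
    Real.rpow_nonneg (sub_nonneg.2 (pow_le_one₀ (cheeger_nonneg hwl) (cheeger_le_one hwl))) _
  refine ⟨?_, fun heven => ?_⟩
  · rcases le_total (1 - lam) 0 with hnonpos | hnonneg
    · linarith
    · linarith [le_rpow_of_sq_pow_le hl0 hnonneg
        (hlam.sq_pow_le_one_sub_sq_cheeger_wl hw hnn hdeg hne (pow_nonneg hnonneg l))]
  · have habs : |1 - lam| ≤ (1 - cheeger (wl w l) ^ 2) ^ ((1 : ℝ) / (2 * l)) :=
      le_rpow_of_sq_pow_le hl0 (abs_nonneg _) <| by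
        rw [heven.pow_abs]
        exact hlam.sq_pow_le_one_sub_sq_cheeger_wl hw hnn hdeg hne (heven.pow_nonneg _)
    linarith [neg_le_of_abs_le habs]

end LaplacianEigenvalues

/-- Corollary: Cheeger bound via neighborhood graphs.
With `h[l]` the Cheeger constant of the neighborhood graph `Γ[l]`: if `l` is even then
`1 - (1 - h[l]²)^{1/(2l)} ≤ λ₁ ≤ … ≤ λ_{N-1} ≤ 1 + (1 - h[l]²)^{1/(2l)}`, and if `l` is
odd then `1 - (1 - h[l]²)^{1/(2l)} ≤ λ₁`. -/
theorem eigenvalue_bounds_from_neighborhood_cheeger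
    (w : V → V → ℝ)
    (hsym : ∀ i j, w i j = w j i) (hnn : ∀ i j, 0 ≤ w i j)
    (hdeg : ∀ i, 0 < deg w i) (hconn : Conn w) (hN : 2 ≤ Fintype.card V)
    (lam1 lamN : ℝ)
    (hlam1 : IsEigen w lam1) (hlam1pos : 0 < lam1)
    (hlam1min : ∀ μ, IsEigen w μ → μ ≠ 0 → lam1 ≤ μ)
    (hlamN : IsEigen w lamN) (hlamNmax : ∀ μ, IsEigen w μ → μ ≤ lamN)
    (l : ℕ) (hl : 1 ≤ l) :
    (Even l →
        1 - (1 - cheeger (wl w l) ^ 2) ^ ((1 : ℝ) / (2 * l)) ≤ lam1 ∧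
          lamN ≤ 1 + (1 - cheeger (wl w l) ^ 2) ^ ((1 : ℝ) / (2 * l))) ∧
      (Odd l → 1 - (1 - cheeger (wl w l) ^ 2) ^ ((1 : ℝ) / (2 * l)) ≤ lam1) := by
  have hbounds {lam : ℝ} (hlam : IsEigen w lam) (hpos : 0 < lam) :=
    eigenvalue_bounds_from_neighborhood_cheeger_general (isBalanced_of_symm hsym) hnn hdeg hlam
      hpos.ne' hl
  have hlamNpos : 0 < lamN := hlam1pos.trans_le (hlamNmax lam1 hlam1)
  exact ⟨fun heven => ⟨(hbounds hlam1 hlam1pos).1, (hbounds hlamN hlamNpos).2 heven⟩,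
    fun _ => (hbounds hlam1 hlam1pos).1⟩

end BJ
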